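/- Let ν > 0 be real, let k ≥ 1 be an integer, and let j be the k-th positive zero of J_ν. Then ν + ((3π/8)(4k − 2))^{2/3} · 2^{−1/3} · ν^{1/3} < j < ν + ((3π/2)·k)^{2/3} · 2^{−1/3} · ν^{1/3} + (3/20) · ((3π/2)·k)^{4/3} · 2^{1/3} · ν^{−1/3}. -/

import Mathlib

open Real Set

/-- The Bessel function of the first kind of order `ν`. -/
noncomputable def besselJ (ν x : ℝ) : ℝ :=
  ∑' m : ℕ, (-1 : ℝ) ^ m / (m.factorial * Real.Gamma (m + ν + 1)) * (x / 2) ^ (2 * (m : ℝ) + ν)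

/-- `j` is the `k`-th positive zero of the Bessel function `J_ν`. -/
def IsKthBesselZero (ν : ℝ) (k : ℕ) (j : ℝ) : Prop :=
  0 < j ∧ besselJ ν j = 0 ∧
    {t : ℝ | t ∈ Set.Ioo 0 j ∧ besselJ ν t = 0}.encard = (k - 1 : ℕ)

/-! For `x > ν` let `θ(x) = √(x² - ν²) - ν arctan (√(x² - ν²) / ν)`. Liouville's transformation with
phase `θ` turns Bessel's equation for `J_ν` into `y'' + q y = 0` with `q > 1`, and the equation
satisfied by `x J_ν'(x)` into one with `q < 1`. By comparison with the sine, consecutive zeros of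
`J_ν` (and `ν` and the first zero) are at most `π` apart in `θ`, consecutive zeros of `J_ν'` are at
least `π` apart, and a zero of `J_ν` comes at least `π / 2` after the preceding zero of `J_ν'`. As
`J_ν J_ν'` is positive up to `ν`, the first zero of `J_ν` is preceded by a zero of `J_ν'` beyond
`ν`, and induction gives `(k - 1 / 2) π ≤ θ(j) ≤ k π` for the `k`-th zero `j` of `J_ν`. Elementary
bounds on `θ` near `ν` turn this into bounds on `j`.
-/

section BesselClifford

lemma inv_Gamma_eq_mul_inv_Gamma_add_one (s : ℝ) : (Gamma s)⁻¹ = s * (Gamma (s + 1))⁻¹ := by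
  rcases eq_or_ne s 0 with rfl | hs
  · simp only [Gamma_zero, inv_zero, zero_mul]
  · rw [Gamma_add_one hs, mul_inv, mul_inv_cancel_left₀ hs]

/-- The coefficients `1 / (m! Γ(m + ν + 1))` of the Bessel–Clifford function of order `ν`; they
vanish at the poles of `Γ`, where Mathlib sets `Γ = 0` and `0⁻¹ = 0`. -/
noncomputable def besselCliffordCoeff (ν : ℝ) (m : ℕ) : ℝ :=
  (m.factorial : ℝ)⁻¹ * (Gamma (m + ν + 1))⁻¹

/-- The Bessel–Clifford function `C_ν(z) = ∑ z ^ m / (m! Γ(m + ν + 1))`: the entire function with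
`J_ν(x) = (x / 2) ^ ν * C_ν(-(x / 2) ^ 2)`. -/
noncomputable def besselClifford (ν z : ℝ) : ℝ :=
  ∑' m : ℕ, besselCliffordCoeff ν m * z ^ m

lemma besselCliffordCoeff_eq_mul_order_add_one (ν : ℝ) (m : ℕ) :
    besselCliffordCoeff ν m = (m + ν + 1) * besselCliffordCoeff (ν + 1) m := by
  rw [besselCliffordCoeff, besselCliffordCoeff, inv_Gamma_eq_mul_inv_Gamma_add_one, ← add_assoc,
    mul_left_comm]

lemma besselCliffordCoeff_succ_mul (ν : ℝ) (m : ℕ) :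
    besselCliffordCoeff ν (m + 1) * (m + 1 : ℕ) = besselCliffordCoeff (ν + 1) m := by
  have hm : ((m + 1 : ℕ) : ℝ) ≠ 0 := Nat.cast_ne_zero.mpr m.succ_ne_zero
  have harg : ((m + 1 : ℕ) : ℝ) + ν + 1 = m + (ν + 1) + 1 := by push_cast; ring
  rw [besselCliffordCoeff, besselCliffordCoeff, harg, Nat.factorial_succ, Nat.cast_mul, mul_inv]
  field_simp

lemma summable_besselCliffordCoeff_mul_pow (ν z : ℝ) :
    Summable fun m : ℕ => besselCliffordCoeff ν m * z ^ m := by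
  refine summable_of_ratio_norm_eventually_le one_half_lt_one ?_
  filter_upwards [tendsto_natCast_atTop_atTop.eventually_ge_atTop (2 * |z| - ν)] with m hm
  have hden : 2 * |z| + 1 ≤ (m + 1) * (m + ν + 1) := by
    nlinarith [abs_nonneg z, (Nat.cast_nonneg m : (0 : ℝ) ≤ m)]
  have hden0 : (0 : ℝ) < (m + 1) * (m + ν + 1) := hden.trans_lt' (by positivity)
  have hratio : (m + 1) * (m + ν + 1) * (besselCliffordCoeff ν (m + 1) * z ^ (m + 1))
      = z * (besselCliffordCoeff ν m * z ^ m) := by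
    rw [besselCliffordCoeff_eq_mul_order_add_one ν m, ← besselCliffordCoeff_succ_mul ν m]
    push_cast
    ring
  refine le_of_mul_le_mul_left ?_ hden0
  calc (m + 1) * (m + ν + 1) * ‖besselCliffordCoeff ν (m + 1) * z ^ (m + 1)‖
      = |z| * ‖besselCliffordCoeff ν m * z ^ m‖ := by
        rw [← Real.norm_of_nonneg hden0.le, ← norm_mul, hratio, norm_mul, Real.norm_eq_abs z]
    _ ≤ (m + 1) * (m + ν + 1) * (1 / 2) * ‖besselCliffordCoeff ν m * z ^ m‖ := by
        gcongr
        linarith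
    _ = _ := mul_assoc _ _ _

lemma hasSum_besselClifford_deriv (ν z : ℝ) :
    HasSum (fun m : ℕ => besselCliffordCoeff ν m * (m * z ^ (m - 1)))
      (besselClifford (ν + 1) z) := by
  rw [← hasSum_nat_add_iff' 1]
  simpa [← mul_assoc, besselCliffordCoeff_succ_mul, besselClifford, -Nat.cast_add]
    using (summable_besselCliffordCoeff_mul_pow (ν + 1) z).hasSum

lemma hasDerivAt_besselClifford (ν z : ℝ) :
    HasDerivAt (besselClifford ν) (besselClifford (ν + 1) z) z := by
  have hz : z ∈ Metric.ball (0 : ℝ) (|z| + 1) := by simp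
  rw [← (hasSum_besselClifford_deriv ν z).tsum_eq]
  refine hasDerivAt_tsum_of_isPreconnected (hasSum_besselClifford_deriv ν (|z| + 1)).summable.norm
    Metric.isOpen_ball (convex_ball _ _).isPreconnected
    (fun m y _ => (hasDerivAt_pow m y).const_mul _) (fun m y hy => ?_) hz
    (summable_besselCliffordCoeff_mul_pow ν z) hz
  have hy' : ‖y‖ ≤ ‖|z| + 1‖ := (mem_ball_zero_iff.mp hy).le.trans (le_abs_self _)
  simp only [norm_mul, norm_pow]
  gcongr

lemma continuous_besselClifford (ν : ℝ) : Continuous (besselClifford ν) :=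
  continuous_iff_continuousAt.mpr fun z => (hasDerivAt_besselClifford ν z).continuousAt

lemma besselClifford_recurrence (ν z : ℝ) :
    besselClifford ν z = (ν + 1) * besselClifford (ν + 1) z + z * besselClifford (ν + 2) z := by
  have hsum := ((summable_besselCliffordCoeff_mul_pow (ν + 1) z).hasSum.mul_left (ν + 1)).add
    ((hasSum_besselClifford_deriv (ν + 1) z).mul_left z)
  rw [show ν + 2 = ν + 1 + 1 by ring]
  refine (tsum_congr fun m => ?_).trans hsum.tsum_eq
  rw [besselCliffordCoeff_eq_mul_order_add_one]
  cases m with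
  | zero => simp
  | succ m => push_cast [Nat.add_sub_cancel]; ring

end BesselClifford

section BesselJ

variable {ν x : ℝ}

lemma besselJ_eq_rpow_mul_besselClifford (hν : 0 ≤ ν) (hx : 0 ≤ x) :
    besselJ ν x = (x / 2) ^ ν * besselClifford ν (-(x / 2) ^ 2) := by
  rw [besselJ, besselClifford, ← tsum_mul_left]
  refine tsum_congr fun m => ?_
  have hpow : (x / 2) ^ (2 * (m : ℝ) + ν) = ((x / 2) ^ 2) ^ m * (x / 2) ^ ν := by
    rw [rpow_add_of_nonneg (by positivity) (by positivity) hν, rpow_mul (by positivity), rpow_two,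
      rpow_natCast]
  rw [hpow, neg_pow ((x / 2) ^ 2), besselCliffordCoeff, div_eq_mul_inv, mul_inv]
  ring

lemma besselJ_zero (hν : 0 < ν) : besselJ ν 0 = 0 := by
  rw [besselJ_eq_rpow_mul_besselClifford hν.le le_rfl, zero_div, zero_rpow hν.ne', zero_mul]

lemma continuousOn_besselJ (hν : 0 ≤ ν) : ContinuousOn (besselJ ν) (Ici 0) := by
  have hC := continuous_besselClifford ν
  have hrpow : Continuous fun x : ℝ => (x / 2) ^ ν := by fun_prop (disch := exact fun _ => .inr hν)
  exact (hrpow.mul (hC.comp (by fun_prop))).continuousOn.congr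
    fun x hx => besselJ_eq_rpow_mul_besselClifford hν hx

lemma besselJ_add_besselJ_add_two (hν : 0 ≤ ν) (hx : 0 < x) :
    besselJ ν x + besselJ (ν + 2) x = 2 * (ν + 1) / x * besselJ (ν + 1) x := by
  have hx2 : 0 < x / 2 := half_pos hx
  rw [besselJ_eq_rpow_mul_besselClifford hν hx.le,
    besselJ_eq_rpow_mul_besselClifford (by positivity) hx.le,
    besselJ_eq_rpow_mul_besselClifford (by positivity) hx.le, besselClifford_recurrence ν,
    rpow_add_one hx2.ne', rpow_add hx2, rpow_two]
  field_simp
  ring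

lemma hasDerivAt_besselJ (hν : 0 ≤ ν) (hx : 0 < x) :
    HasDerivAt (besselJ ν) (ν / x * besselJ ν x - besselJ (ν + 1) x) x := by
  have hx2 : 0 < x / 2 := half_pos hx
  have hhalf : HasDerivAt (fun t : ℝ => t / 2) (1 / 2) x := (hasDerivAt_id x).div_const 2
  have hC : HasDerivAt (fun t : ℝ => besselClifford ν (-(t / 2) ^ 2))
      (besselClifford (ν + 1) (-(x / 2) ^ 2) * -(2 * (x / 2) * (1 / 2))) x :=
    (hasDerivAt_besselClifford ν _).comp x ((hhalf.pow 2).neg.congr_deriv (by norm_num))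
  have hJ : besselJ ν =ᶠ[nhds x] fun t => (t / 2) ^ ν * besselClifford ν (-(t / 2) ^ 2) := by
    filter_upwards [lt_mem_nhds hx] with t ht
      using besselJ_eq_rpow_mul_besselClifford hν ht.le
  refine (((hhalf.rpow_const (.inl hx2.ne')).mul hC).congr_of_eventuallyEq hJ).congr_deriv ?_
  rw [besselJ_eq_rpow_mul_besselClifford hν hx.le,
    besselJ_eq_rpow_mul_besselClifford (by positivity) hx.le, rpow_add_one hx2.ne',
    rpow_sub_one hx2.ne']
  field_simp
  ring

/-- The Euler derivative `x * J_ν'(x)`, written without a derivative. -/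
noncomputable def besselJEuler (ν x : ℝ) : ℝ :=
  ν * besselJ ν x - x * besselJ (ν + 1) x

lemma continuousOn_besselJEuler (hν : 0 ≤ ν) : ContinuousOn (besselJEuler ν) (Ici 0) :=
  ((continuousOn_besselJ hν).const_mul ν).sub
    (continuousOn_id.mul (continuousOn_besselJ (by positivity)))

end BesselJ

section SturmComparison

/-- In the phase variable `θ`, with rate `ω = dθ/dx > 0` on `s`, the pair `(y, z)` solves
`dy/dθ = z`, `dz/dθ = -q y`; that is, `y` is an oscillator with stiffness `q`. -/
structure IsOscillator (q θ ω y z : ℝ → ℝ) (s : Set ℝ) : Prop where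
  hasDerivAt_phase : ∀ x ∈ s, HasDerivAt θ (ω x) x
  rate_pos : ∀ x ∈ s, 0 < ω x
  hasDerivAt_position : ∀ x ∈ s, HasDerivAt y (ω x * z x) x
  hasDerivAt_velocity : ∀ x ∈ s, HasDerivAt z (-(ω x * (q x * y x))) x

/-- The Wronskian of `y` with the unit-stiffness solution `θ ↦ sin (θ - c)`. -/
noncomputable def sineWronskian (θ y z : ℝ → ℝ) (c x : ℝ) : ℝ :=
  y x * cos (θ x - c) - z x * sin (θ x - c)

lemma nonpos_of_hasDerivAt_of_forall_Ioo_le {f : ℝ → ℝ} {f' a b : ℝ} (hab : a < b)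
    (hf : HasDerivAt f f' b) (hle : ∀ x ∈ Ioo a b, f b ≤ f x) : f' ≤ 0 := by
  refine le_of_tendsto (hasDerivAt_iff_tendsto_slope_left_right.mp hf).1 ?_
  filter_upwards [Ioo_mem_nhdsLT hab] with x hx
  rw [slope_def_field]
  exact div_nonpos_of_nonneg_of_nonpos (sub_nonneg.mpr (hle x hx)) (sub_nonpos.mpr hx.2.le)

namespace IsOscillator

variable {q θ ω y z : ℝ → ℝ} {s : Set ℝ} {a b : ℝ}

lemma neg (h : IsOscillator q θ ω y z s) : IsOscillator q θ ω (-y) (-z) s where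
  hasDerivAt_phase := h.hasDerivAt_phase
  rate_pos := h.rate_pos
  hasDerivAt_position x hx := (h.hasDerivAt_position x hx).neg.congr_deriv (by simp)
  hasDerivAt_velocity x hx := (h.hasDerivAt_velocity x hx).neg.congr_deriv (by simp)

lemma mono {t : Set ℝ} (h : IsOscillator q θ ω y z t) (hst : s ⊆ t) :
    IsOscillator q θ ω y z s where
  hasDerivAt_phase x hx := h.hasDerivAt_phase x (hst hx)
  rate_pos x hx := h.rate_pos x (hst hx)
  hasDerivAt_position x hx := h.hasDerivAt_position x (hst hx)
  hasDerivAt_velocity x hx := h.hasDerivAt_velocity x (hst hx)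

lemma continuousOn_phase (h : IsOscillator q θ ω y z s) : ContinuousOn θ s :=
  fun x hx => (h.hasDerivAt_phase x hx).continuousAt.continuousWithinAt

lemma continuousOn_position (h : IsOscillator q θ ω y z s) : ContinuousOn y s :=
  fun x hx => (h.hasDerivAt_position x hx).continuousAt.continuousWithinAt

lemma phase_strictMonoOn (h : IsOscillator q θ ω y z s) (hs : Convex ℝ s) : StrictMonoOn θ s :=
  strictMonoOn_of_hasDerivWithinAt_pos hs h.continuousOn_phase
    (fun x hx => (h.hasDerivAt_phase x (interior_subset hx)).hasDerivWithinAt)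
    (fun x hx => h.rate_pos x (interior_subset hx))

lemma hasDerivAt_sineWronskian (h : IsOscillator q θ ω y z s) (c : ℝ) {x : ℝ} (hx : x ∈ s) :
    HasDerivAt (sineWronskian θ y z c) (ω x * ((q x - 1) * (y x * sin (θ x - c)))) x := by
  have hθ := (h.hasDerivAt_phase x hx).sub_const c
  refine (((h.hasDerivAt_position x hx).mul hθ.cos).sub
    ((h.hasDerivAt_velocity x hx).mul hθ.sin)).congr_deriv ?_
  ring

lemma continuousOn_sineWronskian (h : IsOscillator q θ ω y z s) (c : ℝ) :
    ContinuousOn (sineWronskian θ y z c) s :=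
  fun _ hx => (h.hasDerivAt_sineWronskian c hx).continuousAt.continuousWithinAt

lemma mul_sin_phase_sub_pos (h : IsOscillator q θ ω y z (Icc a b)) (hy : ∀ x ∈ Ioo a b, 0 < y x)
    (hθ : θ b ≤ θ a + π) {x : ℝ} (hx : x ∈ Ioo a b) : 0 < y x * sin (θ x - θ a) := by
  have hθmono := h.phase_strictMonoOn (convex_Icc a b)
  have hab : a ≤ b := (hx.1.trans hx.2).le
  have hax := hθmono (left_mem_Icc.mpr hab) (Ioo_subset_Icc_self hx) hx.1
  have hxb := hθmono (Ioo_subset_Icc_self hx) (right_mem_Icc.mpr hab) hx.2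
  exact mul_pos (hy x hx) (sin_pos_of_pos_of_lt_pi (by linarith) (by linarith))

lemma sineWronskian_lt_sineWronskian_of_one_lt (h : IsOscillator q θ ω y z (Icc a b)) (hab : a < b)
    (hq : ∀ x ∈ Ioo a b, 1 < q x) (hy : ∀ x ∈ Ioo a b, 0 < y x) (hθ : θ b ≤ θ a + π) :
    sineWronskian θ y z (θ a) a < sineWronskian θ y z (θ a) b := by
  refine strictMonoOn_of_hasDerivWithinAt_pos (convex_Icc a b) (h.continuousOn_sineWronskian _)
    (fun x hx => (h.hasDerivAt_sineWronskian _ (interior_subset hx)).hasDerivWithinAt)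
    (fun x hx => ?_) (left_mem_Icc.mpr hab.le) (right_mem_Icc.mpr hab.le) hab
  rw [interior_Icc] at hx
  exact mul_pos (h.rate_pos x (Ioo_subset_Icc_self hx))
    (mul_pos (sub_pos.mpr (hq x hx)) (h.mul_sin_phase_sub_pos hy hθ hx))

lemma sineWronskian_lt_sineWronskian_of_lt_one (h : IsOscillator q θ ω y z (Icc a b)) (hab : a < b)
    (hq : ∀ x ∈ Ioo a b, q x < 1) (hy : ∀ x ∈ Ioo a b, 0 < y x) (hθ : θ b ≤ θ a + π) :
    sineWronskian θ y z (θ a) b < sineWronskian θ y z (θ a) a := by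
  refine strictAntiOn_of_hasDerivWithinAt_neg (convex_Icc a b) (h.continuousOn_sineWronskian _)
    (fun x hx => (h.hasDerivAt_sineWronskian _ (interior_subset hx)).hasDerivWithinAt)
    (fun x hx => ?_) (left_mem_Icc.mpr hab.le) (right_mem_Icc.mpr hab.le) hab
  rw [interior_Icc] at hx
  exact mul_neg_of_pos_of_neg (h.rate_pos x (Ioo_subset_Icc_self hx))
    (mul_neg_of_neg_of_pos (sub_neg.mpr (hq x hx)) (h.mul_sin_phase_sub_pos hy hθ hx))

lemma phase_sub_le_pi_of_pos (h : IsOscillator q θ ω y z (Icc a b)) (hab : a < b)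
    (hq : ∀ x ∈ Ioo a b, 1 < q x) (hy : ∀ x ∈ Ioo a b, 0 < y x) : θ b - θ a ≤ π := by
  by_contra! hcon
  obtain ⟨c, hc, hθc⟩ := intermediate_value_Ioo hab.le h.continuousOn_phase
    (show θ a + π ∈ Ioo (θ a) (θ b) from ⟨by linarith [pi_pos], by linarith⟩)
  have hya : 0 ≤ y a := by
    have hclosure : closure (Ioo a b) = Icc a b := closure_Ioo hab.ne
    exact le_on_closure (fun x hx => (hy x hx).le) continuousOn_const
      (hclosure ▸ h.continuousOn_position) (hclosure ▸ left_mem_Icc.mpr hab.le)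
  have hW := (h.mono (Icc_subset_Icc_right hc.2.le)).sineWronskian_lt_sineWronskian_of_one_lt hc.1
    (fun x hx => hq x ⟨hx.1, hx.2.trans hc.2⟩) (fun x hx => hy x ⟨hx.1, hx.2.trans hc.2⟩) hθc.le
  have hWa : sineWronskian θ y z (θ a) a = y a := by simp [sineWronskian]
  have hWc : sineWronskian θ y z (θ a) c = -y c := by simp [sineWronskian, hθc]
  linarith [hy c hc]

theorem phase_sub_le_pi (h : IsOscillator q θ ω y z (Icc a b)) (hab : a < b)
    (hq : ∀ x ∈ Ioo a b, 1 < q x) (hy : ∀ x ∈ Ioo a b, y x ≠ 0) : θ b - θ a ≤ π := by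
  rcases isPreconnected_Ioo.mapsTo_Ioi_or_Iio
    (h.continuousOn_position.mono Ioo_subset_Icc_self) hy with hpos | hneg
  · exact h.phase_sub_le_pi_of_pos hab hq fun _ hx => hpos hx
  · exact h.neg.phase_sub_le_pi_of_pos hab hq fun x hx => neg_pos.mpr (hneg hx)

lemma position_mul_cos_lt_velocity_mul_sin (h : IsOscillator q θ ω y z (Icc a b)) (hab : a < b)
    (hq : ∀ x ∈ Ioo a b, q x < 1) (hy : ∀ x ∈ Ioo a b, 0 < y x) (hya : y a = 0)
    (hθ : θ b ≤ θ a + π) : y b * cos (θ b - θ a) < z b * sin (θ b - θ a) := by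
  have hW := h.sineWronskian_lt_sineWronskian_of_lt_one hab hq hy hθ
  have hWa : sineWronskian θ y z (θ a) a = 0 := by simp [sineWronskian, hya]
  exact sub_neg.mp (hWa ▸ hW)

lemma pi_le_phase_sub_of_pos (h : IsOscillator q θ ω y z (Icc a b)) (hab : a < b)
    (hq : ∀ x ∈ Ioo a b, q x < 1) (hy : ∀ x ∈ Ioo a b, 0 < y x) (hya : y a = 0) (hyb : y b = 0) :
    π ≤ θ b - θ a := by
  by_contra! hcon
  have hb := right_mem_Icc.mpr hab.le
  have hzb : z b ≤ 0 := by
    refine nonpos_of_mul_nonpos_right ?_ (h.rate_pos b hb)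
    exact nonpos_of_hasDerivAt_of_forall_Ioo_le hab (h.hasDerivAt_position b hb)
      fun x hx => hyb ▸ (hy x hx).le
  have hθ := h.phase_strictMonoOn (convex_Icc a b) (left_mem_Icc.mpr hab.le) hb hab
  have hsin : 0 < sin (θ b - θ a) := sin_pos_of_pos_of_lt_pi (sub_pos.mpr hθ) hcon
  have hW := h.position_mul_cos_lt_velocity_mul_sin hab hq hy hya (by linarith)
  rw [hyb, zero_mul] at hW
  exact hW.not_ge (mul_nonpos_of_nonpos_of_nonneg hzb hsin.le)

theorem pi_le_phase_sub (h : IsOscillator q θ ω y z (Icc a b)) (hab : a < b)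
    (hq : ∀ x ∈ Ioo a b, q x < 1) (hy : ∀ x ∈ Ioo a b, y x ≠ 0) (hya : y a = 0) (hyb : y b = 0) :
    π ≤ θ b - θ a := by
  rcases isPreconnected_Ioo.mapsTo_Ioi_or_Iio
    (h.continuousOn_position.mono Ioo_subset_Icc_self) hy with hpos | hneg
  · exact h.pi_le_phase_sub_of_pos hab hq (fun _ hx => hpos hx) hya hyb
  · exact h.neg.pi_le_phase_sub_of_pos hab hq (fun x hx => neg_pos.mpr (hneg hx))
      (neg_eq_zero.mpr hya) (neg_eq_zero.mpr hyb)

lemma pi_div_two_le_phase_sub_of_pos (h : IsOscillator q θ ω y z (Icc a b)) (hab : a < b)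
    (hq : ∀ x ∈ Ioo a b, q x < 1) (hy : ∀ x ∈ Ioc a b, 0 < y x) (hya : y a = 0)
    (hyz : y b * z b ≤ 0) : π / 2 ≤ θ b - θ a := by
  by_contra! hcon
  have hyb : 0 < y b := hy b (right_mem_Ioc.mpr hab)
  have hzb : z b ≤ 0 := nonpos_of_mul_nonpos_right hyz hyb
  have hθ := h.phase_strictMonoOn (convex_Icc a b) (left_mem_Icc.mpr hab.le)
    (right_mem_Icc.mpr hab.le) hab
  have hcos : 0 < cos (θ b - θ a) := cos_pos_of_mem_Ioo ⟨by linarith [pi_pos], hcon⟩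
  have hsin : 0 < sin (θ b - θ a) :=
    sin_pos_of_pos_of_lt_pi (sub_pos.mpr hθ) (by linarith [pi_pos])
  have hW := h.position_mul_cos_lt_velocity_mul_sin hab hq
    (fun x hx => hy x (Ioo_subset_Ioc_self hx)) hya (by linarith [pi_pos])
  exact hW.not_ge ((mul_nonpos_of_nonpos_of_nonneg hzb hsin.le).trans (mul_pos hyb hcos).le)

theorem pi_div_two_le_phase_sub (h : IsOscillator q θ ω y z (Icc a b)) (hab : a < b)
    (hq : ∀ x ∈ Ioo a b, q x < 1) (hy : ∀ x ∈ Ioc a b, y x ≠ 0) (hya : y a = 0)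
    (hyz : y b * z b ≤ 0) : π / 2 ≤ θ b - θ a := by
  rcases isPreconnected_Ioc.mapsTo_Ioi_or_Iio
    (h.continuousOn_position.mono Ioc_subset_Icc_self) hy with hpos | hneg
  · exact h.pi_div_two_le_phase_sub_of_pos hab hq (fun _ hx => hpos hx) hya hyz
  · exact h.neg.pi_div_two_le_phase_sub_of_pos hab hq (fun x hx => neg_pos.mpr (hneg hx))
      (neg_eq_zero.mpr hya) ((neg_mul_neg (y b) (z b)).trans_le hyz)

end IsOscillator

end SturmComparison

section BesselSolution

/-- `J` solves Bessel's equation of order `ν` on the positive half-line, and `V` is its Euler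
derivative `x * J'`, so that the equation is the first-order system `x J' = V`,
`x V' = (ν² - x²) J`. -/
structure IsBesselSolution (ν : ℝ) (J V : ℝ → ℝ) : Prop where
  hasDerivAt : ∀ x, 0 < x → HasDerivAt J (V x / x) x
  hasDerivAt_euler : ∀ x, 0 < x → HasDerivAt V ((ν ^ 2 - x ^ 2) / x * J x) x

lemma isBesselSolution_besselJ {ν : ℝ} (hν : 0 ≤ ν) :
    IsBesselSolution ν (besselJ ν) (besselJEuler ν) where
  hasDerivAt x hx := (hasDerivAt_besselJ hν hx).congr_deriv (by
    rw [besselJEuler]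
    field_simp)
  hasDerivAt_euler x hx := by
    have hrec := besselJ_add_besselJ_add_two hν hx
    have hderiv := hasDerivAt_besselJ (ν := ν + 1) (by positivity) hx
    refine (((hasDerivAt_besselJ hν hx).const_mul ν).sub
      ((hasDerivAt_id x).mul hderiv)).congr_deriv ?_
    rw [show ν + 1 + 1 = ν + 2 by ring, eq_sub_of_add_eq' hrec]
    simp only [id_eq]
    field_simp
    ring

namespace IsBesselSolution

variable {ν a b j : ℝ} {J V : ℝ → ℝ}

lemma continuousOn (h : IsBesselSolution ν J V) : ContinuousOn J (Ioi 0) :=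
  fun x hx => (h.hasDerivAt x hx).continuousAt.continuousWithinAt

lemma continuousOn_euler (h : IsBesselSolution ν J V) : ContinuousOn V (Ioi 0) :=
  fun x hx => (h.hasDerivAt_euler x hx).continuousAt.continuousWithinAt

lemma exists_euler_eq_zero (h : IsBesselSolution ν J V) (ha : 0 < a) (hab : a < b)
    (hJa : J a = 0) (hJb : J b = 0) : ∃ c ∈ Ioo a b, V c = 0 := by
  obtain ⟨c, hc, hVc⟩ := exists_hasDerivAt_eq_zero hab
    (h.continuousOn.mono fun x hx => ha.trans_le hx.1) (hJa.trans hJb.symm)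
    (fun x hx => h.hasDerivAt x (ha.trans hx.1))
  exact ⟨c, hc, (div_eq_zero_iff.mp hVc).resolve_right (ha.trans hc.1).ne'⟩

lemma euler_ne_euler_of_forall_ne_zero (h : IsBesselSolution ν J V) (hν : 0 < ν) (ha : ν ≤ a)
    (hab : a < b) (hJ : ∀ x ∈ Ioo a b, J x ≠ 0) : V a ≠ V b := by
  have ha0 : 0 < a := hν.trans_le ha
  intro hV
  obtain ⟨c, hc, hderiv⟩ := exists_hasDerivAt_eq_zero hab
    (h.continuousOn_euler.mono fun x hx => ha0.trans_le hx.1) hV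
    (fun x hx => h.hasDerivAt_euler x (ha0.trans hx.1))
  have hc0 : 0 < c := ha0.trans hc.1
  have hfactor : ν ^ 2 - c ^ 2 ≠ 0 := (sub_neg.mpr (pow_lt_pow_left₀ (ha.trans_lt hc.1) hν.le
    two_ne_zero)).ne
  exact mul_ne_zero (div_ne_zero hfactor hc0.ne') (hJ c hc) hderiv

lemma mul_euler_pos (h : IsBesselSolution ν J V) (hJc : ContinuousOn J (Ici 0))
    (hVc : ContinuousOn V (Ici 0)) (hJ0 : J 0 = 0) (hb : 0 < b) (hbν : b ≤ ν)
    (hJ : ∀ x ∈ Ioo 0 b, J x ≠ 0) : 0 < J b * V b := by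
  obtain ⟨c, hc, hslope⟩ := exists_hasDerivAt_eq_slope (fun x => J x * V x) _ hb
    ((hJc.mul hVc).mono Icc_subset_Ici_self)
    (fun x hx => (h.hasDerivAt x hx.1).mul (h.hasDerivAt_euler x hx.1))
  have hc0 : 0 < c := hc.1
  have hJc2 : 0 < J c ^ 2 := sq_pos_iff.mpr (hJ c hc)
  have hfactor : 0 < ν ^ 2 - c ^ 2 :=
    sub_pos.mpr (pow_lt_pow_left₀ (hc.2.trans_le hbν) hc0.le two_ne_zero)
  have hderiv : 0 < V c / c * V c + J c * ((ν ^ 2 - c ^ 2) / c * J c) := by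
    rw [show V c / c * V c + J c * ((ν ^ 2 - c ^ 2) / c * J c)
      = V c ^ 2 / c + (ν ^ 2 - c ^ 2) / c * J c ^ 2 by ring]
    positivity
  rw [hslope, hJ0, zero_mul, sub_zero, sub_zero] at hderiv
  exact (div_pos_iff_of_pos_right hb).mp hderiv

theorem exists_euler_eq_zero_before_first_zero (h : IsBesselSolution ν J V) (hν : 0 < ν)
    (hJc : ContinuousOn J (Ici 0)) (hVc : ContinuousOn V (Ici 0)) (hJ0 : J 0 = 0) (hj : 0 < j)
    (hJ : ∀ x ∈ Ioo 0 j, J x ≠ 0) (hJj : J j = 0) : ∃ a ∈ Ioo ν j, V a = 0 := by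
  have hνj : ν < j := by
    by_contra! hjν
    simpa [hJj] using h.mul_euler_pos hJc hVc hJ0 hj hjν hJ
  have hJVν : 0 < J ν * V ν :=
    h.mul_euler_pos hJc hVc hJ0 hν le_rfl fun x hx => hJ x ⟨hx.1, hx.2.trans hνj⟩
  obtain ⟨c, hc, hslope⟩ := exists_hasDerivAt_eq_slope (fun x => J x ^ 2) _ hνj
    ((h.continuousOn.pow 2).mono fun x hx => hν.trans_le hx.1)
    (fun x hx => (h.hasDerivAt x (hν.trans hx.1)).pow 2)
  have hc0 : 0 < c := hν.trans hc.1
  have hJVc : J c * V c < 0 := by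
    have hJν2 : 0 < J ν ^ 2 := sq_pos_iff.mpr (hJ ν ⟨hν, hνj⟩)
    have hneg : (J j ^ 2 - J ν ^ 2) / (j - ν) < 0 :=
      div_neg_of_neg_of_pos (by simpa [hJj] using hJν2) (sub_pos.mpr hνj)
    rw [← hslope, show (2 : ℕ) * J c ^ (2 - 1) * (V c / c) = 2 / c * (J c * V c) by
      push_cast; ring] at hneg
    exact neg_of_mul_neg_right hneg (by positivity)
  obtain ⟨a, ha, hJVa⟩ := intermediate_value_Ioo' hc.1.le
    ((hJc.mul hVc).mono fun x hx => (hν.trans_le hx.1).le) (show (0 : ℝ) ∈ _ from ⟨hJVc, hJVν⟩)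
  have haj : a < j := ha.2.trans hc.2
  exact ⟨a, ⟨ha.1, haj⟩, (mul_eq_zero.mp hJVa).resolve_left (hJ a ⟨hν.trans ha.1, haj⟩)⟩

end IsBesselSolution

end BesselSolution

section BesselPhase

/-- The phase `√(x² - ν²) - ν arctan (√(x² - ν²) / ν)` of Debye's expansion of `J_ν` for `x > ν`;
in terms of `x = ν sec β` it is `ν (tan β - β)`. -/
noncomputable def besselPhase (ν x : ℝ) : ℝ :=
  √(x ^ 2 - ν ^ 2) - ν * arctan (√(x ^ 2 - ν ^ 2) / ν)

/-- Liouville's factor `(x² - ν²) ^ (1 / 4)`, which removes the first-order term from Bessel's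
equation written in the variable `besselPhase ν`. -/
noncomputable def besselLiouvilleFactor (ν x : ℝ) : ℝ :=
  √√(x ^ 2 - ν ^ 2)

variable {ν x : ℝ}

lemma continuous_besselPhase (ν : ℝ) : Continuous (besselPhase ν) := by
  unfold besselPhase
  fun_prop

lemma besselPhase_self (ν : ℝ) : besselPhase ν ν = 0 := by
  simp [besselPhase]

lemma sq_sub_sq_pos_of_lt (hν : 0 < ν) (hx : ν < x) : 0 < x ^ 2 - ν ^ 2 :=
  sub_pos.mpr (pow_lt_pow_left₀ hx hν.le two_ne_zero)

lemma besselLiouvilleFactor_pos (hν : 0 < ν) (hx : ν < x) : 0 < besselLiouvilleFactor ν x :=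
  sqrt_pos.mpr (sqrt_pos.mpr (sq_sub_sq_pos_of_lt hν hx))

lemma besselLiouvilleFactor_sq (ν x : ℝ) : besselLiouvilleFactor ν x ^ 2 = √(x ^ 2 - ν ^ 2) :=
  sq_sqrt (sqrt_nonneg _)

lemma sq_sub_besselLiouvilleFactor_pow_four (hν : 0 < ν) (hx : ν < x) :
    x ^ 2 - besselLiouvilleFactor ν x ^ 4 = ν ^ 2 := by
  rw [show besselLiouvilleFactor ν x ^ 4 = (besselLiouvilleFactor ν x ^ 2) ^ 2 by ring,
    besselLiouvilleFactor_sq, sq_sqrt (sq_sub_sq_pos_of_lt hν hx).le, sub_sub_cancel]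

lemma hasDerivAt_sqrt_sq_sub_sq (hν : 0 < ν) (hx : ν < x) :
    HasDerivAt (fun t => √(t ^ 2 - ν ^ 2)) (x / √(x ^ 2 - ν ^ 2)) x := by
  refine (((hasDerivAt_pow 2 x).sub_const (ν ^ 2)).sqrt
    (sq_sub_sq_pos_of_lt hν hx).ne').congr_deriv ?_
  rw [Nat.cast_ofNat, Nat.add_one_sub_one, pow_one, mul_div_mul_left _ _ two_ne_zero]

lemma hasDerivAt_besselLiouvilleFactor (hν : 0 < ν) (hx : ν < x) :
    HasDerivAt (besselLiouvilleFactor ν) (x / (2 * besselLiouvilleFactor ν x ^ 3)) x := by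
  have hsqrt : √(x ^ 2 - ν ^ 2) ≠ 0 := (sqrt_pos.mpr (sq_sub_sq_pos_of_lt hν hx)).ne'
  refine ((hasDerivAt_sqrt_sq_sub_sq hν hx).sqrt hsqrt).congr_deriv ?_
  rw [← besselLiouvilleFactor, ← besselLiouvilleFactor_sq, div_div]
  ring

lemma hasDerivAt_besselPhase (hν : 0 < ν) (hx : ν < x) :
    HasDerivAt (besselPhase ν) (besselLiouvilleFactor ν x ^ 2 / x) x := by
  have hsqrt := hasDerivAt_sqrt_sq_sub_sq hν hx
  refine (hsqrt.sub ((hsqrt.div_const ν).arctan.const_mul ν)).congr_deriv ?_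
  have hx0 : 0 < x := hν.trans hx
  have hpos := sq_sub_sq_pos_of_lt hν hx
  have hsq := sq_sqrt hpos.le
  have hsec : 1 + (√(x ^ 2 - ν ^ 2) / ν) ^ 2 = x ^ 2 / ν ^ 2 := by
    rw [div_pow, hsq]
    field_simp
    ring
  have hne := (sqrt_pos.mpr hpos).ne'
  rw [hsec, besselLiouvilleFactor_sq]
  field_simp
  linear_combination -hsq

lemma strictMonoOn_besselPhase (hν : 0 < ν) : StrictMonoOn (besselPhase ν) (Ici ν) := by
  refine strictMonoOn_of_hasDerivWithinAt_pos (convex_Ici ν) (continuous_besselPhase ν).continuousOn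
    (f' := fun x => besselLiouvilleFactor ν x ^ 2 / x) ?_ ?_ <;> rw [interior_Ici]
  · exact fun x hx => (hasDerivAt_besselPhase hν hx).hasDerivWithinAt
  · exact fun x hx => div_pos (pow_pos (besselLiouvilleFactor_pos hν hx) 2) (hν.trans hx)

namespace IsBesselSolution

variable {J V : ℝ → ℝ}

lemma isOscillator (h : IsBesselSolution ν J V) (hν : 0 < ν) :
    IsOscillator (fun x => 1 + x ^ 2 * (x ^ 2 / 4 + ν ^ 2) / besselLiouvilleFactor ν x ^ 12)
      (besselPhase ν) (fun x => besselLiouvilleFactor ν x ^ 2 / x)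
      (fun x => besselLiouvilleFactor ν x * J x)
      (fun x => V x / besselLiouvilleFactor ν x
        + x ^ 2 / (2 * besselLiouvilleFactor ν x ^ 5) * J x) (Ioi ν) where
  hasDerivAt_phase x hx := hasDerivAt_besselPhase hν hx
  rate_pos x hx := div_pos (pow_pos (besselLiouvilleFactor_pos hν hx) 2) (hν.trans hx)
  hasDerivAt_position x hx := by
    have hx0 : 0 < x := hν.trans hx
    have hr := besselLiouvilleFactor_pos hν hx
    refine ((hasDerivAt_besselLiouvilleFactor hν hx).mul (h.hasDerivAt x hx0)).congr_deriv ?_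
    field_simp
    ring
  hasDerivAt_velocity x hx := by
    have hx0 : 0 < x := hν.trans hx
    have hr := besselLiouvilleFactor_pos hν hx
    have hr' := hasDerivAt_besselLiouvilleFactor hν hx
    refine (((h.hasDerivAt_euler x hx0).div hr' hr.ne').add
      (((hasDerivAt_pow 2 x).div ((hr'.pow 5).const_mul 2) (mul_pos two_pos (pow_pos hr 5)).ne').mul
        (h.hasDerivAt x hx0))).congr_deriv ?_
    have hν2 := (sq_sub_besselLiouvilleFactor_pow_four hν hx).symm
    simp only [Pi.div_apply, Pi.pow_apply, hν2]
    generalize besselLiouvilleFactor ν x = r at hr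
    push_cast
    field_simp
    ring

lemma isOscillator_euler (h : IsBesselSolution ν J V) (hν : 0 < ν) :
    IsOscillator (fun x => 1 - x ^ 2 * (3 * x ^ 2 / 4 + ν ^ 2) / besselLiouvilleFactor ν x ^ 12)
      (besselPhase ν) (fun x => besselLiouvilleFactor ν x ^ 2 / x)
      (fun x => V x / besselLiouvilleFactor ν x)
      (fun x => -(besselLiouvilleFactor ν x * J x
        + x ^ 2 / (2 * besselLiouvilleFactor ν x ^ 7) * V x)) (Ioi ν) where
  hasDerivAt_phase x hx := hasDerivAt_besselPhase hν hx
  rate_pos x hx := div_pos (pow_pos (besselLiouvilleFactor_pos hν hx) 2) (hν.trans hx)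
  hasDerivAt_position x hx := by
    have hx0 : 0 < x := hν.trans hx
    have hr := besselLiouvilleFactor_pos hν hx
    refine ((h.hasDerivAt_euler x hx0).div (hasDerivAt_besselLiouvilleFactor hν hx)
      hr.ne').congr_deriv ?_
    have hν2 := (sq_sub_besselLiouvilleFactor_pow_four hν hx).symm
    rw [hν2]
    field_simp
    ring
  hasDerivAt_velocity x hx := by
    have hx0 : 0 < x := hν.trans hx
    have hr := besselLiouvilleFactor_pos hν hx
    have hr' := hasDerivAt_besselLiouvilleFactor hν hx
    refine ((hr'.mul (h.hasDerivAt x hx0)).add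
      (((hasDerivAt_pow 2 x).div ((hr'.pow 7).const_mul 2) (mul_pos two_pos (pow_pos hr 7)).ne').mul
        (h.hasDerivAt_euler x hx0))).neg.congr_deriv ?_
    have hν2 := (sq_sub_besselLiouvilleFactor_pow_four hν hx).symm
    simp only [Pi.div_apply, Pi.pow_apply, hν2]
    generalize besselLiouvilleFactor ν x = r at hr
    push_cast
    field_simp
    ring

end IsBesselSolution

end BesselPhase

section ZeroSpacing

lemma stiffness_euler_lt_one {ν x : ℝ} (hν : 0 < ν) (hx : ν < x) :
    1 - x ^ 2 * (3 * x ^ 2 / 4 + ν ^ 2) / besselLiouvilleFactor ν x ^ 12 < 1 := by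
  have hr := besselLiouvilleFactor_pos hν hx
  have hx0 : 0 < x := hν.trans hx
  exact sub_lt_self 1 (by positivity)

namespace IsBesselSolution

variable {ν a b j j₀ : ℝ} {J V : ℝ → ℝ}

theorem besselPhase_sub_le_pi (h : IsBesselSolution ν J V) (hν : 0 < ν) (ha : ν ≤ a) (hab : a < b)
    (hJ : ∀ x ∈ Ioo a b, J x ≠ 0) : besselPhase ν b - besselPhase ν a ≤ π := by
  have hlim : Filter.Tendsto (fun t => besselPhase ν b - besselPhase ν t) (nhdsWithin a (Ioi a))
      (nhds (besselPhase ν b - besselPhase ν a)) :=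
    ((continuous_const.sub (continuous_besselPhase ν)).tendsto a).mono_left nhdsWithin_le_nhds
  refine le_of_tendsto hlim ?_
  filter_upwards [Ioo_mem_nhdsGT hab] with t ht
  have hνt : ν < t := ha.trans_lt ht.1
  refine ((h.isOscillator hν).mono fun x hx => hνt.trans_le hx.1).phase_sub_le_pi ht.2
    (fun x hx => ?_) fun x hx => mul_ne_zero ?_ (hJ x ⟨ht.1.trans hx.1, hx.2⟩)
  · have hr := besselLiouvilleFactor_pos hν (hνt.trans hx.1)
    have hx0 : 0 < x := hν.trans (hνt.trans hx.1)
    exact lt_add_of_pos_right 1 (by positivity)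
  · exact (besselLiouvilleFactor_pos hν (hνt.trans hx.1)).ne'

theorem pi_le_besselPhase_sub (h : IsBesselSolution ν J V) (hν : 0 < ν) (ha : ν < a) (hab : a < b)
    (hVa : V a = 0) (hVb : V b = 0) (hV : ∀ x ∈ Ioo a b, V x ≠ 0) :
    π ≤ besselPhase ν b - besselPhase ν a :=
  ((h.isOscillator_euler hν).mono fun _ hx => ha.trans_le hx.1).pi_le_phase_sub hab
    (fun _ hx => stiffness_euler_lt_one hν (ha.trans hx.1))
    (fun x hx => div_ne_zero (hV x hx) (besselLiouvilleFactor_pos hν (ha.trans hx.1)).ne')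
    (div_eq_zero_iff.mpr (.inl hVa)) (div_eq_zero_iff.mpr (.inl hVb))

theorem pi_div_two_le_besselPhase_sub (h : IsBesselSolution ν J V) (hν : 0 < ν) (ha : ν < a)
    (haj : a < j) (hVa : V a = 0) (hJj : J j = 0) (hJ : ∀ x ∈ Ioo a j, J x ≠ 0) :
    π / 2 ≤ besselPhase ν j - besselPhase ν a := by
  refine ((h.isOscillator_euler hν).mono fun _ hx => ha.trans_le hx.1).pi_div_two_le_phase_sub haj
    (fun _ hx => stiffness_euler_lt_one hν (ha.trans hx.1)) (fun x hx => ?_)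
    (div_eq_zero_iff.mpr (.inl hVa)) ?_
  · refine div_ne_zero ?_ (besselLiouvilleFactor_pos hν (ha.trans hx.1)).ne'
    rw [← hVa]
    exact (h.euler_ne_euler_of_forall_ne_zero hν ha.le hx.1
      fun t ht => hJ t ⟨ht.1, ht.2.trans_le hx.2⟩).symm
  · have hr := besselLiouvilleFactor_pos hν (ha.trans haj)
    rw [hJj, mul_zero, zero_add, mul_neg, neg_nonpos, div_mul_eq_mul_div, mul_left_comm]
    exact div_nonneg (mul_nonneg (by positivity) (mul_self_nonneg _)) hr.le

theorem exists_euler_eq_zero_pi_le_besselPhase_sub (h : IsBesselSolution ν J V) (hν : 0 < ν)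
    (ha : ν < a) (haj : a < j₀) (hj : j₀ < j) (hVa : V a = 0) (hJ₀ : ∀ x ∈ Ioo a j₀, J x ≠ 0)
    (hJj₀ : J j₀ = 0) (hJ : ∀ x ∈ Ioo j₀ j, J x ≠ 0) (hJj : J j = 0) :
    ∃ b ∈ Ioo j₀ j, V b = 0 ∧ π ≤ besselPhase ν b - besselPhase ν a := by
  have hνj₀ : ν < j₀ := ha.trans haj
  obtain ⟨b, hb, hVb⟩ := h.exists_euler_eq_zero (hν.trans hνj₀) hj hJj₀ hJj
  refine ⟨b, hb, hVb, h.pi_le_besselPhase_sub hν ha (haj.trans hb.1) hVa hVb fun x hx => ?_⟩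
  rcases le_total x j₀ with hxj₀ | hxj₀
  · rw [← hVa]
    exact (h.euler_ne_euler_of_forall_ne_zero hν ha.le hx.1
      fun t ht => hJ₀ t ⟨ht.1, ht.2.trans_le hxj₀⟩).symm
  · rw [← hVb]
    exact h.euler_ne_euler_of_forall_ne_zero hν (hνj₀.le.trans hxj₀) hx.2
      fun t ht => hJ t ⟨hxj₀.trans_lt ht.1, ht.2.trans hb.2⟩

end IsBesselSolution

end ZeroSpacing

section ZeroCounting

namespace IsKthBesselZero

variable {ν j : ℝ} {k : ℕ}

lemma besselJ_ne_zero_of_mem_Ioo (hj : IsKthBesselZero ν 1 j) :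
    ∀ x ∈ Ioo 0 j, besselJ ν x ≠ 0 := by
  intro x hx hJx
  have hempty : {t : ℝ | t ∈ Ioo 0 j ∧ besselJ ν t = 0} = ∅ := by
    rw [← encard_eq_zero, hj.2.2, Nat.sub_self, Nat.cast_zero]
  exact eq_empty_iff_forall_notMem.mp hempty x ⟨hx, hJx⟩

lemma exists_previous (hj : IsKthBesselZero ν (k + 2) j) :
    ∃ j₀ < j, IsKthBesselZero ν (k + 1) j₀ ∧ ∀ x ∈ Ioo j₀ j, besselJ ν x ≠ 0 := by
  obtain ⟨-, -, hcard⟩ := hj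
  set S := {t : ℝ | t ∈ Ioo 0 j ∧ besselJ ν t = 0}
  have hne : S.Nonempty := by
    rw [← encard_ne_zero, hcard]
    simp
  obtain ⟨m, hm, hmax⟩ := exists_max_image S id (finite_of_encard_eq_coe hcard) hne
  have hbefore : {t : ℝ | t ∈ Ioo 0 m ∧ besselJ ν t = 0} = S \ {m} := by
    ext t
    constructor
    · rintro ⟨ht, hJt⟩
      exact ⟨⟨⟨ht.1, ht.2.trans hm.1.2⟩, hJt⟩, ht.2.ne⟩
    · rintro ⟨ht, htm⟩
      exact ⟨⟨ht.1.1, lt_of_le_of_ne (hmax t ht) htm⟩, ht.2⟩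
  refine ⟨m, hm.1.2, ⟨hm.1.1, hm.2, ?_⟩, fun x hx hJx => ?_⟩
  · rw [hbefore, encard_sdiff_singleton_of_mem hm, hcard]
    norm_cast
  · exact hx.1.not_ge (hmax x ⟨⟨hm.1.1.trans hx.1, hx.2⟩, hJx⟩)

lemma exists_besselJEuler_eq_zero (hν : 0 < ν) (hj : IsKthBesselZero ν (k + 1) j) :
    ∃ a ∈ Ioo ν j, besselJEuler ν a = 0 ∧ (∀ x ∈ Ioo a j, besselJ ν x ≠ 0) ∧
      k * π ≤ besselPhase ν a := by
  have hJ := isBesselSolution_besselJ hν.le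
  induction k generalizing j with
  | zero =>
    have hne := hj.besselJ_ne_zero_of_mem_Ioo
    obtain ⟨a, ha, hVa⟩ := hJ.exists_euler_eq_zero_before_first_zero hν
      (continuousOn_besselJ hν.le) (continuousOn_besselJEuler hν.le) (besselJ_zero hν) hj.1 hne
      hj.2.1
    refine ⟨a, ha, hVa, fun x hx => hne x ⟨(hν.trans ha.1).trans hx.1, hx.2⟩, ?_⟩
    rw [Nat.cast_zero, zero_mul, ← besselPhase_self ν]
    exact ((strictMonoOn_besselPhase hν).monotoneOn) self_mem_Ici ha.1.le ha.1.le
  | succ k ih =>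
    obtain ⟨j₀, hlt, hj₀, hne⟩ := hj.exists_previous
    obtain ⟨a, ha, hVa, hJa, hphase⟩ := ih hj₀
    obtain ⟨b, hb, hVb, hstep⟩ := hJ.exists_euler_eq_zero_pi_le_besselPhase_sub hν ha.1 ha.2 hlt
      hVa hJa hj₀.2.1 hne hj.2.1
    refine ⟨b, ⟨(ha.1.trans ha.2).trans hb.1, hb.2⟩, hVb,
      fun x hx => hne x ⟨hb.1.trans hx.1, hx.2⟩, ?_⟩
    push_cast
    linarith

lemma order_lt (hν : 0 < ν) (hj : IsKthBesselZero ν (k + 1) j) : ν < j :=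
  let ⟨_, ha, _⟩ := hj.exists_besselJEuler_eq_zero hν
  ha.1.trans ha.2

theorem le_besselPhase (hν : 0 < ν) (hj : IsKthBesselZero ν (k + 1) j) :
    (k + 1 / 2) * π ≤ besselPhase ν j := by
  obtain ⟨a, ha, hVa, hJa, hphase⟩ := hj.exists_besselJEuler_eq_zero hν
  linarith [(isBesselSolution_besselJ hν.le).pi_div_two_le_besselPhase_sub hν ha.1 ha.2 hVa
    hj.2.1 hJa]

theorem besselPhase_le (hν : 0 < ν) (hj : IsKthBesselZero ν (k + 1) j) :
    besselPhase ν j ≤ (k + 1) * π := by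
  have hJ := isBesselSolution_besselJ hν.le
  induction k generalizing j with
  | zero =>
    have hstep := hJ.besselPhase_sub_le_pi hν le_rfl (hj.order_lt hν)
      fun x hx => hj.besselJ_ne_zero_of_mem_Ioo x ⟨hν.trans hx.1, hx.2⟩
    simpa [besselPhase_self] using hstep
  | succ k ih =>
    obtain ⟨j₀, hlt, hj₀, hne⟩ := hj.exists_previous
    have hstep := hJ.besselPhase_sub_le_pi hν (hj₀.order_lt hν).le hlt hne
    push_cast
    linarith [ih hj₀]

end IsKthBesselZero

end ZeroCounting

section PhaseInversion

lemma lt_of_hasDerivAt_lt {f g f' g' : ℝ → ℝ} {a b : ℝ} (hab : a < b)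
    (hf : ContinuousOn f (Icc a b)) (hg : ContinuousOn g (Icc a b))
    (hf' : ∀ x ∈ Ioo a b, HasDerivAt f (f' x) x) (hg' : ∀ x ∈ Ioo a b, HasDerivAt g (g' x) x)
    (ha : f a = g a) (hlt : ∀ x ∈ Ioo a b, f' x < g' x) : f b < g b := by
  obtain ⟨c, hc, hslope⟩ := exists_hasDerivAt_eq_slope (g - f) (g' - f') hab (hg.sub hf)
    fun x hx => (hg' x hx).sub (hf' x hx)
  have hpos : 0 < (g' - f') c := sub_pos.mpr (hlt c hc)
  rw [hslope, div_pos_iff_of_pos_right (sub_pos.mpr hab)] at hpos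
  simpa [ha] using hpos

variable {ν s N j : ℝ}

lemma lt_mul_one_add (hν : 0 < ν) {t : ℝ} (ht : 0 < t) : ν < ν * (1 + t) :=
  lt_mul_of_one_lt_right hν (lt_add_of_pos_right 1 ht)

-- Near the turning point `besselPhase ν (ν * (1 + 2 * s ^ 2))` is `8 / 3 * ν * s ^ 3` to leading
-- order, and this equals `2 / 3 * N` for `s = (N / (4 * ν)) ^ (1 / 3)`.
lemma besselPhase_rate_lt (hν : 0 < ν) (hs : 0 < s) :
    besselLiouvilleFactor ν (ν * (1 + 2 * s ^ 2)) ^ 2 / (ν * (1 + 2 * s ^ 2)) < 2 * s := by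
  have hx : 0 < ν * (1 + 2 * s ^ 2) := by positivity
  rw [div_lt_iff₀ hx, besselLiouvilleFactor_sq, sqrt_lt' (by positivity), ← sub_pos]
  ring_nf
  positivity

lemma lt_besselPhase_rate_mul (hν : 0 < ν) (hs : 0 < s) :
    2 * s < besselLiouvilleFactor ν (ν * (1 + 2 * s ^ 2 + 6 / 5 * s ^ 4)) ^ 2
      / (ν * (1 + 2 * s ^ 2 + 6 / 5 * s ^ 4)) * (1 + 6 / 5 * s ^ 2) := by
  have hx : 0 < ν * (1 + 2 * s ^ 2 + 6 / 5 * s ^ 4) := by positivity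
  have hc : 0 < 1 + 6 / 5 * s ^ 2 := by positivity
  rw [besselLiouvilleFactor_sq, div_mul_eq_mul_div, lt_div_iff₀ hx, ← div_lt_iff₀ hc,
    lt_sqrt (by positivity), div_pow, div_lt_iff₀ (by positivity), ← sub_pos]
  ring_nf
  positivity

theorem besselPhase_mul_lt_eight_thirds_mul_pow_three (hν : 0 < ν) (hs : 0 < s) :
    besselPhase ν (ν * (1 + 2 * s ^ 2)) < 8 / 3 * ν * s ^ 3 := by
  have hθ := continuous_besselPhase ν
  refine lt_of_hasDerivAt_lt (f := fun t => besselPhase ν (ν * (1 + 2 * t ^ 2)))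
    (g := fun t => 8 / 3 * ν * t ^ 3) (g' := fun t => 2 * t * (ν * (4 * t))) hs
    (by fun_prop) (by fun_prop) (fun t ht => ?_) (fun t _ => ?_) (by simp [besselPhase_self])
    fun t ht => mul_lt_mul_of_pos_right (besselPhase_rate_lt hν ht.1) ?_
  · have ht0 : 0 < t := ht.1
    have hx : HasDerivAt (fun t : ℝ => ν * (1 + 2 * t ^ 2)) (ν * (4 * t)) t :=
      ((((hasDerivAt_pow 2 t).const_mul 2).const_add 1).const_mul ν).congr_deriv
        (by push_cast; ring)
    exact (hasDerivAt_besselPhase hν (lt_mul_one_add hν (by positivity))).comp t hx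
  · exact ((hasDerivAt_pow 3 t).const_mul _).congr_deriv (by push_cast; ring)
  · exact mul_pos hν (mul_pos four_pos ht.1)

theorem eight_thirds_mul_pow_three_lt_besselPhase_mul (hν : 0 < ν) (hs : 0 < s) :
    8 / 3 * ν * s ^ 3 < besselPhase ν (ν * (1 + 2 * s ^ 2 + 6 / 5 * s ^ 4)) := by
  have hθ := continuous_besselPhase ν
  refine lt_of_hasDerivAt_lt (f := fun t => 8 / 3 * ν * t ^ 3)
    (g := fun t => besselPhase ν (ν * (1 + 2 * t ^ 2 + 6 / 5 * t ^ 4)))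
    (f' := fun t => 4 * ν * t * (2 * t))
    (g' := fun t => besselLiouvilleFactor ν (ν * (1 + 2 * t ^ 2 + 6 / 5 * t ^ 4)) ^ 2
      / (ν * (1 + 2 * t ^ 2 + 6 / 5 * t ^ 4)) * (ν * (4 * t + 24 / 5 * t ^ 3))) hs
    (by fun_prop) (by fun_prop) (fun t _ => ?_) (fun t ht => ?_) (by simp [besselPhase_self])
    fun t ht => (mul_lt_mul_of_pos_left (lt_besselPhase_rate_mul hν ht.1) ?_).trans_eq ?_
  · exact ((hasDerivAt_pow 3 t).const_mul _).congr_deriv (by push_cast; ring)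
  · have ht0 : 0 < t := ht.1
    have hx : HasDerivAt (fun t : ℝ => ν * (1 + 2 * t ^ 2 + 6 / 5 * t ^ 4))
        (ν * (4 * t + 24 / 5 * t ^ 3)) t :=
      (((((hasDerivAt_pow 2 t).const_mul 2).const_add 1).add
        ((hasDerivAt_pow 4 t).const_mul (6 / 5))).const_mul ν).congr_deriv (by push_cast; ring)
    refine (hasDerivAt_besselPhase hν ?_).comp t hx
    rw [add_assoc]
    exact lt_mul_one_add hν (by positivity)
  · exact mul_pos (mul_pos four_pos hν) ht.1
  · ring

lemma rpow_div_three_pow_three {x : ℝ} (hx : 0 ≤ x) (p : ℝ) : (x ^ (p / 3)) ^ 3 = x ^ p := by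
  rw [← rpow_mul_natCast hx, Nat.cast_ofNat, div_mul_cancel₀ p three_ne_zero]

lemma eight_thirds_mul_rpow_one_third_pow_three (hν : 0 < ν) (hN : 0 < N) :
    8 / 3 * ν * ((N / (4 * ν)) ^ ((1 : ℝ) / 3)) ^ 3 = 2 / 3 * N := by
  rw [rpow_div_three_pow_three (by positivity), rpow_one]
  field_simp
  norm_num

lemma two_mul_rpow_one_third_sq (hν : 0 < ν) (hN : 0 < N) :
    2 * ν * ((N / (4 * ν)) ^ ((1 : ℝ) / 3)) ^ 2
      = N ^ ((2 : ℝ) / 3) * (2 : ℝ) ^ (-(1 : ℝ) / 3) * ν ^ ((1 : ℝ) / 3) := by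
  refine (pow_left_inj₀ (by positivity) (by positivity) three_ne_zero).mp ?_
  rw [mul_pow, pow_right_comm]
  simp only [mul_pow, rpow_div_three_pow_three, hν.le, hN.le, zero_le_two, rpow_one, rpow_two,
    rpow_neg_one, rpow_div_three_pow_three (show 0 ≤ N / (4 * ν) by positivity)]
  field_simp
  norm_num

lemma six_fifths_mul_rpow_one_third_pow_four (hν : 0 < ν) (hN : 0 < N) :
    6 / 5 * ν * ((N / (4 * ν)) ^ ((1 : ℝ) / 3)) ^ 4
      = 3 / 20 * N ^ ((4 : ℝ) / 3) * (2 : ℝ) ^ ((1 : ℝ) / 3) * ν ^ (-(1 : ℝ) / 3) := by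
  refine (pow_left_inj₀ (by positivity) (by positivity) three_ne_zero).mp ?_
  rw [mul_pow, pow_right_comm]
  simp only [mul_pow, rpow_div_three_pow_three, hν.le, hN.le, zero_le_two, rpow_one, rpow_ofNat,
    rpow_neg_one, rpow_div_three_pow_three (show 0 ≤ N / (4 * ν) by positivity)]
  field_simp
  norm_num

theorem lt_of_two_thirds_mul_le_besselPhase (hν : 0 < ν) (hN : 0 < N) (hj : ν ≤ j)
    (h : 2 / 3 * N ≤ besselPhase ν j) :
    ν + N ^ ((2 : ℝ) / 3) * (2 : ℝ) ^ (-(1 : ℝ) / 3) * ν ^ ((1 : ℝ) / 3) < j := by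
  have hs : 0 < (N / (4 * ν)) ^ ((1 : ℝ) / 3) := by positivity
  have hphase := (besselPhase_mul_lt_eight_thirds_mul_pow_three hν hs).trans_le
    ((eight_thirds_mul_rpow_one_third_pow_three hν hN).trans_le h)
  rw [← two_mul_rpow_one_third_sq hν hN]
  linarith [((strictMonoOn_besselPhase hν).lt_iff_lt
    (lt_mul_one_add hν (by positivity)).le hj).mp hphase]

theorem lt_of_besselPhase_le_two_thirds_mul (hν : 0 < ν) (hN : 0 < N) (hj : ν ≤ j)
    (h : besselPhase ν j ≤ 2 / 3 * N) :
    j < ν + N ^ ((2 : ℝ) / 3) * (2 : ℝ) ^ (-(1 : ℝ) / 3) * ν ^ ((1 : ℝ) / 3)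
      + 3 / 20 * N ^ ((4 : ℝ) / 3) * (2 : ℝ) ^ ((1 : ℝ) / 3) * ν ^ (-(1 : ℝ) / 3) := by
  have hs : 0 < (N / (4 * ν)) ^ ((1 : ℝ) / 3) := by positivity
  have hphase := (h.trans_eq (eight_thirds_mul_rpow_one_third_pow_three hν hN).symm).trans_lt
    (eight_thirds_mul_pow_three_lt_besselPhase_mul hν hs)
  rw [← two_mul_rpow_one_third_sq hν hN, ← six_fifths_mul_rpow_one_third_pow_four hν hN]
  rw [add_assoc] at hphase
  linarith [((strictMonoOn_besselPhase hν).lt_iff_lt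
    hj (lt_mul_one_add hν (by positivity)).le).mp hphase]

end PhaseInversion

theorem stmt_9 (ν : ℝ) (hν : 0 < ν) (k : ℕ) (hk : 1 ≤ k) (j : ℝ)
    (hj : IsKthBesselZero ν k j) :
    ν + ((3 * Real.pi / 8) * (4 * (k : ℝ) - 2)) ^ ((2 : ℝ) / 3) * (2 : ℝ) ^ (-(1 : ℝ) / 3)
        * ν ^ ((1 : ℝ) / 3) < j ∧
    j < ν + ((3 * Real.pi / 2) * (k : ℝ)) ^ ((2 : ℝ) / 3) * (2 : ℝ) ^ (-(1 : ℝ) / 3)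
        * ν ^ ((1 : ℝ) / 3)
      + (3 / 20) * ((3 * Real.pi / 2) * (k : ℝ)) ^ ((4 : ℝ) / 3) * (2 : ℝ) ^ ((1 : ℝ) / 3)
        * ν ^ (-(1 : ℝ) / 3) := by
  obtain ⟨k, rfl⟩ := Nat.exists_eq_add_of_le' hk
  have hνj := (hj.order_lt hν).le
  have hlow : 2 / 3 * (3 * π / 8 * (4 * ((k + 1 : ℕ) : ℝ) - 2)) = (k + 1 / 2) * π := by
    push_cast; ring
  have hupp : 2 / 3 * (3 * π / 2 * ((k + 1 : ℕ) : ℝ)) = (k + 1) * π := by push_cast; ring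
  have hlow_pos : 0 < 3 * π / 8 * (4 * ((k + 1 : ℕ) : ℝ) - 2) := by
    linarith [show 0 < (k + 1 / 2) * π by positivity]
  exact ⟨lt_of_two_thirds_mul_le_besselPhase hν hlow_pos hνj (hlow.trans_le (hj.le_besselPhase hν)),
    lt_of_besselPhase_le_two_thirds_mul hν (by positivity) hνj
      ((hj.besselPhase_le hν).trans_eq hupp.symm)⟩
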